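/- If S and S' are seeds consisting only of replicated components and S ~ S', then S ≡D S'. -/

import Mathlib

namespace CCS

/-- Process terms over a set of actions `A`. -/
inductive Proc (A : Type) where
  | nil : Proc A
  | pre : A → Proc A → Proc A
  | par : Proc A → Proc A → Proc A
  | repl : A → Proc A → Proc A

namespace Proc

/-- Finite processes: no occurrence of replication. -/
def IsFin {A : Type} : Proc A → Prop
  | nil => True
  | pre _ p => IsFin p
  | par p q => IsFin p ∧ IsFin q
  | repl _ _ => False

/-- Processes of the calculus: replication is applied only to prefixed
finite processes, at top level. -/
def Wf {A : Type} : Proc A → Prop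
  | nil => True
  | pre _ p => IsFin p
  | par p q => Wf p ∧ Wf q
  | repl _ p => IsFin p

/-- Size: the number of prefixes. -/
def size {A : Type} : Proc A → ℕ
  | nil => 0
  | pre _ p => size p + 1
  | par p q => size p + size q
  | repl _ p => size p + 1

/-- `reps n p` is the parallel composition of `n` copies of `p`. -/
def reps {A : Type} : ℕ → Proc A → Proc A
  | 0, _ => nil
  | n+1, p => par p (reps n p)

/-- `bang F` is `!F`: for `F = α₁.F₁ | ... | αk.Fk` it is `!α₁.F₁ | ... | !αk.Fk`. -/
def bang {A : Type} : Proc A → Proc A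
  | nil => nil
  | pre a p => repl a p
  | par p q => par (bang p) (bang q)
  | repl a p => repl a p

end Proc

/-- The labelled transition system (no synchronisation). -/
inductive Step {A : Type} : Proc A → A → Proc A → Prop where
  | pre {a : A} {p : Proc A} : Step (Proc.pre a p) a p
  | repl {a : A} {p : Proc A} :
      Step (Proc.repl a p) a (Proc.par (Proc.repl a p) p)
  | parL {p : Proc A} {a : A} {p' : Proc A} (q : Proc A) :
      Step p a p' → Step (Proc.par p q) a (Proc.par p' q)
  | parR {q : Proc A} {a : A} {q' : Proc A} (p : Proc A) :
      Step q a q' → Step (Proc.par p q) a (Proc.par p q')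

/-- Strong bisimulations. -/
def IsBisim {A : Type} (R : Proc A → Proc A → Prop) : Prop :=
  Symmetric R ∧
    ∀ p q, R p q → ∀ a p', Step p a p' → ∃ q', Step q a q' ∧ R p' q'

/-- Strong bisimilarity `~`: the greatest strong bisimulation. -/
def Bisim {A : Type} (p q : Proc A) : Prop :=
  ∃ R, IsBisim R ∧ R p q

/-- The congruence `≡D`: the smallest congruence generated by the abelian
monoid laws for parallel composition (neutral element `0`) and the
distribution law `α.(F | α.F | ... | α.F) = α.F | α.F | ... | α.F`
(with as many occurrences of `F` on both sides). -/
inductive EqD {A : Type} : Proc A → Proc A → Prop where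
  | refl (p : Proc A) : EqD p p
  | symm {p q : Proc A} : EqD p q → EqD q p
  | trans {p q r : Proc A} : EqD p q → EqD q r → EqD p r
  | parComm (p q : Proc A) : EqD (Proc.par p q) (Proc.par q p)
  | parAssoc (p q r : Proc A) :
      EqD (Proc.par (Proc.par p q) r) (Proc.par p (Proc.par q r))
  | parNil (p : Proc A) : EqD (Proc.par p Proc.nil) p
  | distr (a : A) (F : Proc A) (n : ℕ) (hF : F.IsFin) :
      EqD (Proc.pre a (Proc.par F (Proc.reps n (Proc.pre a F))))
          (Proc.reps (n + 1) (Proc.pre a F))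
  | congPre (a : A) {p q : Proc A} : EqD p q → EqD (Proc.pre a p) (Proc.pre a q)
  | congPar {p p' q q' : Proc A} :
      EqD p p' → EqD q q' → EqD (Proc.par p q) (Proc.par p' q')
  | congRepl (a : A) {p q : Proc A} : EqD p q → EqD (Proc.repl a p) (Proc.repl a q)

/-- Finite (single-hole) contexts `D ::= [] | α.D | D|F`. -/
inductive FCtx (A : Type) where
  | hole : FCtx A
  | pre : A → FCtx A → FCtx A
  | par : FCtx A → Proc A → FCtx A

/-- Filling the hole of a finite context. -/
def FCtx.fill {A : Type} : FCtx A → Proc A → Proc A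
  | .hole, p => p
  | .pre a d, p => Proc.pre a (d.fill p)
  | .par d f, p => Proc.par (d.fill p) f

/-- Well-formedness of a finite context: the processes placed in parallel
are finite. -/
def FCtx.Wf {A : Type} : FCtx A → Prop
  | .hole => True
  | .pre _ d => d.Wf
  | .par d f => d.Wf ∧ f.IsFin

/-- Single-hole contexts `C ::= D | !α.D | C|P` (the hole never occurs
directly under a replication). -/
inductive Ctx (A : Type) where
  | ofD : FCtx A → Ctx A
  | repl : A → FCtx A → Ctx A
  | par : Ctx A → Proc A → Ctx A

/-- Filling the hole of a context. -/
def Ctx.fill {A : Type} : Ctx A → Proc A → Proc A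
  | .ofD d, p => d.fill p
  | .repl a d, p => Proc.repl a (d.fill p)
  | .par c q, p => Proc.par (c.fill p) q

/-- Well-formedness of a context. -/
def Ctx.Wf {A : Type} : Ctx A → Prop
  | .ofD d => d.Wf
  | .repl _ d => d.Wf
  | .par c p => c.Wf ∧ p.Wf

/-- `k` consecutive transitions. -/
inductive NSteps {A : Type} : Proc A → ℕ → Proc A → Prop where
  | zero (p : Proc A) : NSteps p 0 p
  | succ {p : Proc A} {a : A} {p' : Proc A} {k : ℕ} {q : Proc A} :
      Step p a p' → NSteps p' k q → NSteps p (k + 1) q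

/-- `P ⇒k Q`: `k` transitions from `P` reach a process `≡D Q`. -/
def Reduct {A : Type} (p : Proc A) (k : ℕ) (q : Proc A) : Prop :=
  ∃ p', NSteps p k p' ∧ EqD p' q

/-- `TopRepl S a G` holds when `!a.G` is one of the (top-level) replicated
parallel components of `S`. -/
inductive TopRepl {A : Type} : Proc A → A → Proc A → Prop where
  | repl (a : A) (p : Proc A) : TopRepl (Proc.repl a p) a p
  | parL {p : Proc A} {a : A} {r : Proc A} (q : Proc A) :
      TopRepl p a r → TopRepl (Proc.par p q) a r
  | parR {q : Proc A} {a : A} {r : Proc A} (p : Proc A) :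
      TopRepl q a r → TopRepl (Proc.par p q) a r

/-- `S` has only replicated components: `S = ∏i !αi.Si`. -/
def ReplOnly {A : Type} : Proc A → Prop
  | .nil => True
  | .pre _ _ => False
  | .par p q => ReplOnly p ∧ ReplOnly q
  | .repl _ p => p.IsFin

/-- `S ⫫ F` : for no component `!αi.Si` of `S` and no `k` do we have
`F ⇒k αi.Si`. -/
def Dis {A : Type} (S F : Proc A) : Prop :=
  ∀ a G, TopRepl S a G → ∀ k, ¬ Reduct F k (Proc.pre a G)

/-- `S ▷ R` : there is `k > 0` with `S ⇒k S | R`. -/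
def Purg {A : Type} (S R : Proc A) : Prop :=
  ∃ k, 0 < k ∧ Reduct S k (Proc.par S R)

/-- A process is a seed if no (well-formed) process of strictly smaller
size is bisimilar to it. -/
def IsSeed {A : Type} (p : Proc A) : Prop :=
  p.Wf ∧ ∀ q : Proc A, q.Wf → Bisim q p → p.size ≤ q.size

/-- The rewriting relation `⤳_T` (first argument), defined modulo `≡D` by
the axioms (B1) `C[α.F] ⤳_{!α.F|F'} C[0]` and (B2) `!α.F | !α.F | P ⤳_Q !α.F | P`. -/
inductive Rw {A : Type} : Proc A → Proc A → Proc A → Prop where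
  | B1 {a : A} {F F' : Proc A} (C : Ctx A) :
      F.IsFin → F'.Wf → C.Wf →
      Rw (Proc.par (Proc.repl a F) F') (C.fill (Proc.pre a F)) (C.fill Proc.nil)
  | B2 {a : A} {F P Q : Proc A} :
      F.IsFin → P.Wf → Q.Wf →
      Rw Q (Proc.par (Proc.repl a F) (Proc.par (Proc.repl a F) P))
           (Proc.par (Proc.repl a F) P)
  | eqD {T T' P P' Q Q' : Proc A} :
      EqD T T' → EqD P P' → Rw T' P' Q' → EqD Q Q' → Rw T P Q

/-- `⤳*_T` : the reflexive transitive closure of `⤳_T`. -/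
def RwStar {A : Type} (T : Proc A) : Proc A → Proc A → Prop :=
  Relation.ReflTransGen (Rw T)

/-- Convertibility `P ⋈ Q`: some process `T` satisfies `P ⤳*_T T` and `Q ⤳*_T T`. -/
def Convert {A : Type} (P Q : Proc A) : Prop :=
  ∃ T : Proc A, T.Wf ∧ RwStar T P T ∧ RwStar T Q T

/-- `∏i αi.Fi` for a list of prefixed components. -/
def prodPre {A : Type} (l : List (A × Proc A)) : Proc A :=
  (l.map fun x => Proc.pre x.1 x.2).foldr Proc.par Proc.nil

/-- `∏i !αi.Fi` for a list of prefixed components. -/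
def bangProd {A : Type} (l : List (A × Proc A)) : Proc A :=
  (l.map fun x => Proc.repl x.1 x.2).foldr Proc.par Proc.nil

end CCS

/-!
Bisimilarity classes form a commutative monoid under parallel composition. Write `s` for the class
of the seed. Every transition of `s` leads to a multiple of `s`, and by coinduction this makes
absorption local: if `s * (g * h) = s` then `s * g = s`.

By minimality, no prefixed subterm of the body `F` of a component `!a.F` is absorbed by `s`, since
erasing it would give a smaller bisimilar process. Among bodies with this property, `s * F = s * G`
implies `F ~ G`: a transition of `F` is never answered by `s`, because that would leave a process
too large to be worn down to the other side. As both seeds have the transitions of `s`, their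
components agree up to bisimilarity of the bodies, and minimality rules out repetitions.

For finite processes `~` implies `≡D` because every finite process is uniquely a product of
irreducible ones (Milner and Moller). A prefix `a.F` can only be a power `(a.P)ⁿ⁺¹` of an
irreducible prefix, with `F ~ P | (a.P)ⁿ`, and this is what the distribution law expresses.
-/

namespace CCS

/-! ### Unique decomposition in interleaving monoids -/

theorem exists_count_ne_maximal {M : Type*} [DecidableEq M] (size : M → ℕ) {s t : Multiset M}
    (h : s ≠ t) :
    ∃ p, s.count p ≠ t.count p ∧ ∀ q, size p < size q → s.count q = t.count q := by
  obtain ⟨p₀, hp₀⟩ : ∃ p, s.count p ≠ t.count p := by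
    by_contra! heq
    exact h (Multiset.ext.2 heq)
  have mem_of_count_ne {p : M} (hp : s.count p ≠ t.count p) :
      p ∈ {p ∈ (s + t).toFinset | s.count p ≠ t.count p} := by
    refine Finset.mem_filter.2 ⟨?_, hp⟩
    rw [Multiset.mem_toFinset, ← Multiset.count_pos, Multiset.count_add]
    omega
  obtain ⟨p, hp, hmax⟩ := Finset.exists_max_image _ size ⟨p₀, mem_of_count_ne hp₀⟩
  refine ⟨p, (Finset.mem_filter.1 hp).2, fun q hq => ?_⟩
  by_contra hne
  exact absurd (hmax q (mem_of_count_ne hne)) (not_le.2 hq)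

section Interleaving

variable {M A : Type*}

/-- `x` behaves as the prefix `a.f`: its only transition is labelled `a` and leads to `f`. -/
def IsPrefix (step : M → A → M → Prop) (a : A) (f x : M) : Prop :=
  ∀ b y, step x b y ↔ b = a ∧ y = f

theorem IsPrefix.unique {step : M → A → M → Prop} {a b : A} {f g x : M}
    (hf : IsPrefix step a f x) (hg : IsPrefix step b g x) : a = b ∧ f = g :=
  (hg a f).1 ((hf a f).2 ⟨rfl, rfl⟩)

variable [CommMonoid M]

/-- A commutative monoid with labelled transitions in which a product moves by moving one of its
factors, `1` is the only deadlock, and every transition decreases the additive `size` by one. -/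
structure IsInterleaving (step : M → A → M → Prop) (size : M → ℕ) : Prop where
  size_mul : ∀ x y, size (x * y) = size x + size y
  size_step : ∀ {x a y}, step x a y → size x = size y + 1
  step_mul_iff : ∀ {x y a z}, step (x * y) a z ↔
    (∃ x', step x a x' ∧ z = x' * y) ∨ ∃ y', step y a y' ∧ z = x * y'
  exists_step : ∀ {x}, x ≠ 1 → ∃ a y, step x a y

/-- The multiset `s` is a decomposition of `x` into irreducible elements. -/
def IsFactorization (s : Multiset M) (x : M) : Prop :=
  (∀ p ∈ s, Irreducible p) ∧ s.prod = x

theorem IsFactorization.mul {s t : Multiset M} {x y : M} (hs : IsFactorization s x)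
    (ht : IsFactorization t y) : IsFactorization (s + t) (x * y) :=
  ⟨fun p hp => (Multiset.mem_add.1 hp).elim (hs.1 p) (ht.1 p),
    by rw [Multiset.prod_add, hs.2, ht.2]⟩

theorem IsFactorization.erase [DecidableEq M] {s : Multiset M} {x : M} (hs : IsFactorization s x)
    (q : M) : IsFactorization (s.erase q) (s.erase q).prod :=
  ⟨fun p hp => hs.1 p (Multiset.mem_of_mem_erase hp), rfl⟩

namespace IsInterleaving

variable {step : M → A → M → Prop} {size : M → ℕ}

theorem size_one (hM : IsInterleaving step size) : size 1 = 0 := by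
  have := hM.size_mul 1 1
  rw [mul_one] at this
  omega

theorem size_pos (hM : IsInterleaving step size) {x : M} (hx : x ≠ 1) : 0 < size x := by
  obtain ⟨a, y, hxy⟩ := hM.exists_step hx
  have := hM.size_step hxy
  omega

theorem ne_one_of_step (hM : IsInterleaving step size) {x y : M} {a : A} (h : step x a y) :
    x ≠ 1 := by
  rintro rfl
  have := hM.size_step h
  rw [hM.size_one] at this
  omega

theorem subsingleton_units (hM : IsInterleaving step size) : Subsingleton Mˣ := by
  refine ⟨fun u v => ?_⟩
  have eq_one (w : Mˣ) : (w : M) = 1 := by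
    by_contra hw
    have hsize := hM.size_mul w ↑w⁻¹
    rw [Units.mul_inv, hM.size_one] at hsize
    have := hM.size_pos hw
    omega
  exact Units.ext ((eq_one u).trans (eq_one v).symm)

theorem exists_isFactorization (hM : IsInterleaving step size) (x : M) :
    ∃ s, IsFactorization s x := by
  induction hn : size x using Nat.strong_induction_on generalizing x with
  | _ n ih =>
    by_cases hx : x = 1
    · exact ⟨0, by simp, by simp [hx]⟩
    by_cases hirr : Irreducible x
    · exact ⟨{x}, by simpa using hirr, by simp⟩
    obtain ⟨y, z, rfl, hy, hz⟩ : ∃ y z, x = y * z ∧ y ≠ 1 ∧ z ≠ 1 := by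
      have := hM.subsingleton_units
      simpa only [irreducible_iff, isUnit_iff_eq_one, hx, not_false_eq_true, true_and, not_forall,
        not_or, exists_prop] using hirr
    have hyz := hM.size_mul y z
    have hy' := hM.size_pos hy
    have hz' := hM.size_pos hz
    obtain ⟨s, hs⟩ := ih (size y) (by omega) y rfl
    obtain ⟨t, ht⟩ := ih (size z) (by omega) z rfl
    exact ⟨s + t, hs.mul ht⟩

theorem size_le_of_mem (hM : IsInterleaving step size) {s : Multiset M} {p : M} (h : p ∈ s) :
    size p ≤ size s.prod := by
  obtain ⟨t, rfl⟩ := Multiset.exists_cons_of_mem h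
  rw [Multiset.prod_cons, hM.size_mul]
  omega

theorem eq_singleton_of_irreducible (hM : IsInterleaving step size) {t : Multiset M} {p : M}
    (ht : IsFactorization t p) (hp : Irreducible p) : t = {p} := by
  have := hM.subsingleton_units
  obtain ⟨r, hr⟩ : ∃ r, r ∈ t := Multiset.exists_mem_of_ne_zero fun h0 =>
    hp.ne_one (by rw [← ht.2, h0, Multiset.prod_zero])
  obtain ⟨t, rfl⟩ := Multiset.exists_cons_of_mem hr
  have hprod : r * t.prod = p := by rw [← ht.2, Multiset.prod_cons]
  have htail : t.prod = 1 :=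
    (Irreducible.eq_one_or_eq_one (hprod ▸ hp)).resolve_left (ht.1 r hr).ne_one
  have ht0 : t = 0 := by
    refine Multiset.eq_zero_of_forall_notMem fun q hq => ?_
    have hle := hM.size_le_of_mem hq
    have hpos := hM.size_pos (ht.1 q (Multiset.mem_cons_of_mem hq)).ne_one
    rw [htail, hM.size_one] at hle
    omega
  rw [ht0, ← hprod, htail, mul_one]
  rfl

variable [DecidableEq M]

theorem count_le_size_prod (hM : IsInterleaving step size) {p : M} (hp : p ≠ 1) (s : Multiset M) :
    s.count p ≤ size s.prod := by
  induction s using Multiset.induction_on with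
  | empty => simp
  | cons x s ih =>
    rw [Multiset.prod_cons, hM.size_mul, Multiset.count_cons]
    split_ifs with h
    · have := hM.size_pos (h ▸ hp)
      omega
    · omega

theorem step_prod_iff (hM : IsInterleaving step size) {s : Multiset M} {a : A} {z : M} :
    step s.prod a z ↔ ∃ q ∈ s, ∃ q', step q a q' ∧ z = q' * (s.erase q).prod := by
  constructor
  · intro h
    induction s using Multiset.induction_on generalizing z with
    | empty => exact absurd rfl (hM.ne_one_of_step h)
    | cons x s ih =>
      rw [Multiset.prod_cons, hM.step_mul_iff] at h
      rcases h with ⟨x', hx', rfl⟩ | ⟨y', hy', rfl⟩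
      · exact ⟨x, by simp, x', hx', by simp⟩
      · obtain ⟨q, hq, q', hq', rfl⟩ := ih hy'
        refine ⟨q, Multiset.mem_cons_of_mem hq, q', hq', ?_⟩
        rw [Multiset.erase_cons_tail_of_mem hq, Multiset.prod_cons, mul_left_comm]
  · rintro ⟨q, hq, q', hq', rfl⟩
    rw [← Multiset.prod_erase hq]
    exact hM.step_mul_iff.2 (Or.inl ⟨q', hq', rfl⟩)

theorem count_eq_zero_of_step (hM : IsInterleaving step size) {p q q' : M} {a : A} {u : Multiset M}
    (hq : step q a q') (hu : IsFactorization u q') (hqp : size q ≤ size p) : u.count p = 0 := by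
  refine Multiset.count_eq_zero.2 fun hp => ?_
  have hle := hM.size_le_of_mem hp
  have hdec := hM.size_step hq
  rw [hu.2] at hle
  omega

end IsInterleaving

/-- Every transition `q → q'` of a member of `s` is answered by a transition `r → r'` of a member
of `t` such that replacing `q` by the factors of `q'`, respectively `r` by those of `r'`, turns `s`
and `t` into the same multiset. -/
def StepsMatch [DecidableEq M] (step : M → A → M → Prop) (s t : Multiset M) : Prop :=
  ∀ q ∈ s, ∀ a q' u, step q a q' → IsFactorization u q' →
    ∃ r ∈ t, ∃ r' v, step r a r' ∧ IsFactorization v r' ∧ u + s.erase q = v + t.erase r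

namespace IsInterleaving

variable [DecidableEq M] {step : M → A → M → Prop} {size : M → ℕ}
 

theorem stepsMatch_of_unique_below (hM : IsInterleaving step size) {x : M} {s t : Multiset M}
    (unique_below : ∀ y, size y < size x →
      ∀ u v, IsFactorization u y → IsFactorization v y → u = v)
    (hs : IsFactorization s x) (ht : IsFactorization t x) : StepsMatch step s t := by
  intro q hq a q' u hq' hu
  have hstep : step x a (q' * (s.erase q).prod) := by
    rw [← hs.2]
    exact hM.step_prod_iff.2 ⟨q, hq, q', hq', rfl⟩
  have hsize := hM.size_step hstep
  obtain ⟨r, hr, r', hr', heq⟩ := hM.step_prod_iff.1 (ht.2.symm ▸ hstep)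
  obtain ⟨v, hv⟩ := hM.exists_isFactorization r'
  refine ⟨r, hr, r', v, hr', hv, unique_below _ (by omega) _ _ (hu.mul (hs.erase q)) ?_⟩
  rw [heq]
  exact hv.mul (ht.erase r)

theorem exists_step_count_maximal (hM : IsInterleaving step size) {p q : M} (hp : p ≠ 1)
    (hq : q ≠ 1) :
    ∃ a q' u, step q a q' ∧ IsFactorization u q' ∧ ∀ b r v, step q b r → IsFactorization v r →
      v.count p ≤ u.count p := by
  let counts : Set ℕ := {k | ∃ a q' u, step q a q' ∧ IsFactorization u q' ∧ u.count p = k}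
  have nonempty : counts.Nonempty := by
    obtain ⟨a, q', hq'⟩ := hM.exists_step hq
    obtain ⟨u, hu⟩ := hM.exists_isFactorization q'
    exact ⟨_, a, q', u, hq', hu, rfl⟩
  have bounded : BddAbove counts := by
    refine ⟨size q, ?_⟩
    rintro _ ⟨a, q', u, hq', hu, rfl⟩
    have hcount := hM.count_le_size_prod hp u
    have hdec := hM.size_step hq'
    rw [hu.2] at hcount
    omega
  obtain ⟨a, q', u, hq', hu, hmax⟩ := Nat.sSup_mem nonempty bounded
  exact ⟨a, q', u, hq', hu, fun b r v hr hv =>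
    hmax.symm ▸ le_csSup bounded ⟨b, r, v, hr, hv, rfl⟩⟩

-- A factor `q` larger than `p` occurs equally often on both sides, so its transitions are answered
-- by `q` itself; a transition of `q` creating as many `p` as possible then yields a contradiction.
theorem size_le_of_stepsMatch (hM : IsInterleaving step size) {s t : Multiset M} {p : M}
    (hst : StepsMatch step s t) (hs : ∀ q ∈ s, Irreducible q) (hlt : t.count p < s.count p)
    (hlarge : ∀ q, size p < size q → s.count q = t.count q) {q : M} (hq : q ∈ s) :
    size q ≤ size p := by
  by_contra! hqp
  have hp : p ∈ s := Multiset.count_pos.1 (by omega)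
  obtain ⟨a, q', u, hq', hu, hmax⟩ := hM.exists_step_count_maximal (hs p hp).ne_one (hs q hq).ne_one
  obtain ⟨r, -, r', v, hr', hv, heq⟩ := hst q hq a q' u hq' hu
  obtain rfl : r = q := by
    by_contra hrq
    have hcount := congrArg (Multiset.count q) heq
    rw [Multiset.count_add, Multiset.count_add, Multiset.count_erase_self,
      Multiset.count_erase_of_ne (Ne.symm hrq), hM.count_eq_zero_of_step hq' hu le_rfl,
      ← hlarge q hqp] at hcount
    have := Multiset.count_pos.2 hq
    omega
  have hcount := congrArg (Multiset.count p) heq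
  have hpr : p ≠ r := by rintro rfl; omega
  rw [Multiset.count_add, Multiset.count_add, Multiset.count_erase_of_ne hpr,
    Multiset.count_erase_of_ne hpr] at hcount
  have := hmax a r' v hr' hv
  omega

theorem eq_of_stepsMatch (hM : IsInterleaving step size) {s t : Multiset M} {p : M}
    (hst : StepsMatch step s t) (hs : ∀ q ∈ s, Irreducible q) (hlt : t.count p < s.count p)
    (hsize : ∀ r ∈ t, size r ≤ size p) {q : M} (hq : q ∈ s) : q = p := by
  by_contra hqp
  obtain ⟨a, q', hq'⟩ := hM.exists_step (hs q hq).ne_one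
  obtain ⟨u, hu⟩ := hM.exists_isFactorization q'
  obtain ⟨r, hr, r', v, hr', hv, heq⟩ := hst q hq a q' u hq' hu
  have hcount := congrArg (Multiset.count p) heq
  rw [Multiset.count_add, Multiset.count_add, Multiset.count_erase_of_ne (Ne.symm hqp),
    hM.count_eq_zero_of_step hr' hv (hsize r hr)] at hcount
  have : (t.erase r).count p ≤ t.count p := Multiset.count_le_of_le p (Multiset.erase_le r t)
  omega

theorem notMem_and_count_eq_one_of_stepsMatch (hM : IsInterleaving step size) {s t : Multiset M}
    {p : M} (hts : StepsMatch step t s) (ht : ∀ r ∈ t, Irreducible r) (ht0 : t ≠ 0)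
    (hlt : t.count p < s.count p) (hsize : ∀ r ∈ t, size r ≤ size p) (hs : ∀ q ∈ s, q = p) :
    p ∉ t ∧ s.count p = 1 := by
  have count_erase {r : M} (hr : r ∈ t) : (t.erase r).count p = s.count p - 1 := by
    obtain ⟨a, r', hr'⟩ := hM.exists_step (ht r hr).ne_one
    obtain ⟨u, hu⟩ := hM.exists_isFactorization r'
    obtain ⟨q, hq, q', v, hq', hv, heq⟩ := hts r hr a r' u hr' hu
    obtain rfl := hs q hq
    have hcount := congrArg (Multiset.count q) heq
    rwa [Multiset.count_add, Multiset.count_add, Multiset.count_erase_self,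
      hM.count_eq_zero_of_step hr' hu (hsize r hr),
      hM.count_eq_zero_of_step hq' hv le_rfl, zero_add, zero_add] at hcount
  have hpt : p ∉ t := by
    intro hp
    have hcount := count_erase hp
    rw [Multiset.count_erase_self] at hcount
    have := Multiset.count_pos.2 hp
    omega
  obtain ⟨r, hr⟩ := Multiset.exists_mem_of_ne_zero ht0
  have hcount := count_erase hr
  have hle : (t.erase r).count p ≤ t.count p := Multiset.count_le_of_le p (Multiset.erase_le r t)
  rw [Multiset.count_eq_zero.2 hpt] at hle
  exact ⟨hpt, by omega⟩

theorem count_le_of_stepsMatch (hM : IsInterleaving step size) {s t : Multiset M} {x p : M}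
    (hs : IsFactorization s x) (ht : IsFactorization t x) (hst : StepsMatch step s t)
    (hts : StepsMatch step t s) (hlarge : ∀ q, size p < size q → s.count q = t.count q) :
    s.count p ≤ t.count p := by
  by_contra! hlt
  have hps : p ∈ s := Multiset.count_pos.1 (by omega)
  have size_le_left : ∀ q ∈ s, size q ≤ size p := fun q =>
    hM.size_le_of_stepsMatch hst hs.1 hlt hlarge
  have size_le_right : ∀ r ∈ t, size r ≤ size p := by
    intro r hr
    by_contra! hpr
    have hrs : r ∈ s := by rwa [← Multiset.count_pos, hlarge r hpr, Multiset.count_pos]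
    exact absurd (size_le_left r hrs) (not_le.2 hpr)
  have eq_p : ∀ q ∈ s, q = p := fun q => hM.eq_of_stepsMatch hst hs.1 hlt size_le_right
  have ht0 : t ≠ 0 := by
    rintro rfl
    have hle := hM.size_le_of_mem hps
    have hpos := hM.size_pos (hs.1 p hps).ne_one
    rw [hs.2, ← ht.2, Multiset.prod_zero, hM.size_one] at hle
    omega
  obtain ⟨hpt, hcount⟩ :=
    hM.notMem_and_count_eq_one_of_stepsMatch hts ht.1 ht0 hlt size_le_right eq_p
  have hx : x = p := by
    rw [← hs.2, Multiset.eq_replicate_card.2 eq_p, ← Multiset.count_eq_card.2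
      fun q hq => (eq_p q hq).symm, hcount, Multiset.replicate_one, Multiset.prod_singleton]
  subst hx
  exact hpt (hM.eq_singleton_of_irreducible ht (hs.1 x hps) ▸ Multiset.mem_singleton_self x)

end IsInterleaving

namespace IsInterleaving

variable {step : M → A → M → Prop} {size : M → ℕ}

theorem isFactorization_unique (hM : IsInterleaving step size) {s t : Multiset M} {x : M}
    (hs : IsFactorization s x) (ht : IsFactorization t x) : s = t := by
  classical
  induction hn : size x using Nat.strong_induction_on generalizing x s t with
  | _ n ih =>
    have unique_below : ∀ y, size y < size x →
        ∀ u v, IsFactorization u y → IsFactorization v y → u = v :=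
      fun y hy u v hu hv => ih (size y) (hn ▸ hy) hu hv rfl
    have hst := hM.stepsMatch_of_unique_below unique_below hs ht
    have hts := hM.stepsMatch_of_unique_below unique_below ht hs
    by_contra hne
    obtain ⟨p, hp, hlarge⟩ := exists_count_ne_maximal size hne
    exact hp ((hM.count_le_of_stepsMatch hs ht hst hts hlarge).antisymm
      (hM.count_le_of_stepsMatch ht hs hts hst fun q hq => (hlarge q hq).symm))

theorem mul_right_cancel (hM : IsInterleaving step size) {x y z : M} (h : x * z = y * z) :
    x = y := by
  obtain ⟨s, hs⟩ := hM.exists_isFactorization x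
  obtain ⟨t, ht⟩ := hM.exists_isFactorization y
  obtain ⟨u, hu⟩ := hM.exists_isFactorization z
  have hst : s = t := add_right_cancel (hM.isFactorization_unique (hs.mul hu) (h ▸ ht.mul hu))
  rw [← hs.2, ← ht.2, hst]

-- All factors lead to the same residual `f`, so if `p ≠ q` are factors then `f` would have both
-- one occurrence of `p` less than `x` and at least as many.
theorem eq_of_mem_factorization_prefix (hM : IsInterleaving step size) {a : A} {f x p q : M}
    {s : Multiset M} (hx : IsPrefix step a f x) (hs : IsFactorization s x) (hp : p ∈ s)
    (hq : q ∈ s) : q = p := by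
  classical
  have factorization_residual {r r' : M} {b : A} {u : Multiset M} (hr : r ∈ s)
      (hr' : step r b r') (hu : IsFactorization u r') : IsFactorization (u + s.erase r) f := by
    have hstep := hM.step_prod_iff.2 ⟨r, hr, r', hr', rfl⟩
    rw [hs.2, hx] at hstep
    exact hstep.2 ▸ hu.mul (hs.erase r)
  by_contra hqp
  obtain ⟨b, p', hp'⟩ := hM.exists_step (hs.1 p hp).ne_one
  obtain ⟨c, q', hq'⟩ := hM.exists_step (hs.1 q hq).ne_one
  obtain ⟨u, hu⟩ := hM.exists_isFactorization p'
  obtain ⟨v, hv⟩ := hM.exists_isFactorization q'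
  have hcount := congrArg (Multiset.count p) (hM.isFactorization_unique
    (factorization_residual hp hp' hu) (factorization_residual hq hq' hv))
  rw [Multiset.count_add, Multiset.count_add, Multiset.count_erase_self,
    Multiset.count_erase_of_ne (Ne.symm hqp), hM.count_eq_zero_of_step hp' hu le_rfl] at hcount
  have := Multiset.count_pos.2 hp
  omega

theorem exists_irreducible_prefix_pow (hM : IsInterleaving step size) {a : A} {f x : M}
    (hx : IsPrefix step a f x) :
    ∃ p p' n, Irreducible p ∧ IsPrefix step a p' p ∧ x = p ^ (n + 1) ∧ f = p' * p ^ n := by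
  obtain ⟨s, hs⟩ := hM.exists_isFactorization x
  obtain ⟨p, hp⟩ : ∃ p, p ∈ s := Multiset.exists_mem_of_ne_zero fun h0 =>
    hM.ne_one_of_step ((hx a f).2 ⟨rfl, rfl⟩) (by rw [← hs.2, h0, Multiset.prod_zero])
  obtain ⟨t, rfl⟩ := Multiset.exists_cons_of_mem hp
  have ht : t = Multiset.replicate t.card p := Multiset.eq_replicate_card.2 fun q hq =>
    hM.eq_of_mem_factorization_prefix hx hs hp (Multiset.mem_cons_of_mem hq)
  have hxp : x = p * p ^ t.card := by
    rw [← hs.2, Multiset.prod_cons, ht, Multiset.prod_replicate, Multiset.card_replicate]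
  have step_p {b : A} {y : M} (hy : step p b y) : b = a ∧ y * p ^ t.card = f := by
    rw [← hx, hxp]
    exact hM.step_mul_iff.2 (Or.inl ⟨y, hy, rfl⟩)
  obtain ⟨b, p', hp'⟩ := hM.exists_step (hs.1 p hp).ne_one
  obtain ⟨rfl, hf⟩ := step_p hp'
  refine ⟨p, p', t.card, hs.1 p hp, fun c y => ⟨fun hy => ?_, ?_⟩, by rw [hxp, pow_succ'], hf.symm⟩
  · exact ⟨(step_p hy).1, hM.mul_right_cancel ((step_p hy).2.trans hf.symm)⟩
  · rintro ⟨rfl, rfl⟩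
    exact hp'

end IsInterleaving

end Interleaving

/-! ### The monoid of bisimilarity classes -/

section Bisimilarity

variable {A : Type}

theorem step_par_iff {p q r : Proc A} {a : A} :
    Step (.par p q) a r ↔
      (∃ p', Step p a p' ∧ r = .par p' q) ∨ ∃ q', Step q a q' ∧ r = .par p q' := by
  constructor
  · rintro (_ | _ | ⟨_, h⟩ | ⟨_, h⟩)
    · exact Or.inl ⟨_, h, rfl⟩
    · exact Or.inr ⟨_, h, rfl⟩
  · rintro (⟨p', h, rfl⟩ | ⟨q', h, rfl⟩)
    · exact .parL q h
    · exact .parR p h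

theorem not_step_nil {a : A} {p : Proc A} : ¬Step .nil a p := nofun

namespace Bisim

theorem refl (p : Proc A) : Bisim p p :=
  ⟨Eq, ⟨fun _ _ => Eq.symm, by rintro p _ rfl a p' h; exact ⟨p', h, rfl⟩⟩, rfl⟩

theorem symm {p q : Proc A} : Bisim p q → Bisim q p
  | ⟨R, hR, h⟩ => ⟨R, hR, hR.1 h⟩

theorem step {p q p' : Proc A} {a : A} : Bisim p q → Step p a p' → ∃ q', Step q a q' ∧ Bisim p' q'
  | ⟨R, hR, h⟩, hp =>
    let ⟨q', hq, h'⟩ := hR.2 p q h a p' hp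
    ⟨q', hq, R, hR, h'⟩

theorem of_simulations (R : Proc A → Proc A → Prop)
    (forth : ∀ {p q a p'}, R p q → Step p a p' → ∃ q', Step q a q' ∧ R p' q')
    (back : ∀ {p q a q'}, R p q → Step q a q' → ∃ p', Step p a p' ∧ R p' q')
    {p q : Proc A} (h : R p q) : Bisim p q := by
  refine ⟨fun p q => R p q ∨ R q p, ⟨fun _ _ => Or.symm, ?_⟩, Or.inl h⟩
  rintro p q (h | h) a p' hp
  · obtain ⟨q', hq, h'⟩ := forth h hp
    exact ⟨q', hq, Or.inl h'⟩
  · obtain ⟨q', hq, h'⟩ := back h hp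
    exact ⟨q', hq, Or.inr h'⟩

theorem trans {p q r : Proc A} (hpq : Bisim p q) (hqr : Bisim q r) : Bisim p r := by
  refine of_simulations (fun p r => ∃ q, Bisim p q ∧ Bisim q r) ?_ ?_ ⟨q, hpq, hqr⟩
  · rintro p r a p' ⟨q, hpq, hqr⟩ hp
    obtain ⟨q', hq, hpq'⟩ := hpq.step hp
    obtain ⟨r', hr, hqr'⟩ := hqr.step hq
    exact ⟨r', hr, q', hpq', hqr'⟩
  · rintro p r a r' ⟨q, hpq, hqr⟩ hr
    obtain ⟨q', hq, hrq'⟩ := hqr.symm.step hr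
    obtain ⟨p', hp, hqp'⟩ := hpq.symm.step hq
    exact ⟨p', hp, q', hqp'.symm, hrq'.symm⟩

theorem par {p p' q q' : Proc A} (hp : Bisim p p') (hq : Bisim q q') :
    Bisim (.par p q) (.par p' q') := by
  refine ⟨fun u v => ∃ p p' q q', Bisim p p' ∧ Bisim q q' ∧ u = .par p q ∧ v = .par p' q',
    ⟨?_, ?_⟩, p, p', q, q', hp, hq, rfl, rfl⟩
  · rintro _ _ ⟨p, p', q, q', hp, hq, rfl, rfl⟩
    exact ⟨p', p, q', q, hp.symm, hq.symm, rfl, rfl⟩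
  · rintro _ _ ⟨p, p', q, q', hp, hq, rfl, rfl⟩ a _ hpar
    rcases step_par_iff.1 hpar with ⟨p₁, h, rfl⟩ | ⟨q₁, h, rfl⟩
    · obtain ⟨p₁', h', hp₁⟩ := hp.step h
      exact ⟨_, .parL q' h', _, _, _, _, hp₁, hq, rfl, rfl⟩
    · obtain ⟨q₁', h', hq₁⟩ := hq.step h
      exact ⟨_, .parR p' h', _, _, _, _, hp, hq₁, rfl, rfl⟩

theorem parComm (p q : Proc A) : Bisim (.par p q) (.par q p) := by
  refine ⟨fun u v => ∃ p q, u = .par p q ∧ v = .par q p, ⟨?_, ?_⟩, p, q, rfl, rfl⟩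
  · rintro _ _ ⟨p, q, rfl, rfl⟩
    exact ⟨q, p, rfl, rfl⟩
  · rintro _ _ ⟨p, q, rfl, rfl⟩ a _ hpar
    rcases step_par_iff.1 hpar with ⟨p', h, rfl⟩ | ⟨q', h, rfl⟩
    · exact ⟨_, .parR q h, _, _, rfl, rfl⟩
    · exact ⟨_, .parL p h, _, _, rfl, rfl⟩

theorem parAssoc (p q r : Proc A) : Bisim (.par (.par p q) r) (.par p (.par q r)) := by
  refine of_simulations (fun u v => ∃ p q r, u = .par (.par p q) r ∧ v = .par p (.par q r))
    ?_ ?_ ⟨p, q, r, rfl, rfl⟩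
  · rintro _ _ a _ ⟨p, q, r, rfl, rfl⟩ hpar
    rcases step_par_iff.1 hpar with ⟨_, hleft, rfl⟩ | ⟨r', h, rfl⟩
    · rcases step_par_iff.1 hleft with ⟨p', h, rfl⟩ | ⟨q', h, rfl⟩
      · exact ⟨_, .parL _ h, _, _, _, rfl, rfl⟩
      · exact ⟨_, .parR _ (.parL _ h), _, _, _, rfl, rfl⟩
    · exact ⟨_, .parR _ (.parR _ h), _, _, _, rfl, rfl⟩
  · rintro _ _ a _ ⟨p, q, r, rfl, rfl⟩ hpar
    rcases step_par_iff.1 hpar with ⟨p', h, rfl⟩ | ⟨_, hright, rfl⟩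
    · exact ⟨_, .parL _ (.parL _ h), _, _, _, rfl, rfl⟩
    · rcases step_par_iff.1 hright with ⟨q', h, rfl⟩ | ⟨r', h, rfl⟩
      · exact ⟨_, .parL _ (.parR _ h), _, _, _, rfl, rfl⟩
      · exact ⟨_, .parR _ h, _, _, _, rfl, rfl⟩

theorem parNil (p : Proc A) : Bisim (.par p .nil) p := by
  refine of_simulations (fun u v => u = .par v .nil) ?_ ?_ rfl
  · rintro _ p a _ rfl hpar
    rcases step_par_iff.1 hpar with ⟨p', h, rfl⟩ | ⟨_, h, -⟩
    · exact ⟨p', h, rfl⟩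
    · exact absurd h not_step_nil
  · rintro _ p a p' rfl h
    exact ⟨_, .parL _ h, rfl⟩

/-- Bisimilarity as an equivalence relation on terms. -/
def setoid (A : Type) : Setoid (Proc A) := ⟨Bisim, refl, symm, trans⟩

end Bisim

/-- Terms up to bisimilarity: a commutative monoid under parallel composition. -/
def BisimClass (A : Type) : Type := Quotient (Bisim.setoid A)

namespace BisimClass

/-- The bisimilarity class of a term. -/
def mk (p : Proc A) : BisimClass A := Quotient.mk (Bisim.setoid A) p

theorem mk_eq_mk {p q : Proc A} : mk p = mk q ↔ Bisim p q := Quotient.eq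

theorem mk_surjective : Function.Surjective (mk : Proc A → BisimClass A) := Quotient.mk_surjective

instance : CommMonoid (BisimClass A) where
  mul := Quotient.map₂ .par fun _ _ hp _ _ hq => hp.par hq
  one := mk .nil
  mul_assoc := by
    rintro ⟨p⟩ ⟨q⟩ ⟨r⟩
    exact mk_eq_mk.2 (.parAssoc p q r)
  mul_comm := by
    rintro ⟨p⟩ ⟨q⟩
    exact mk_eq_mk.2 (.parComm p q)
  mul_one := by
    rintro ⟨p⟩
    exact mk_eq_mk.2 (.parNil p)
  one_mul := by
    rintro ⟨p⟩
    exact mk_eq_mk.2 ((Bisim.parComm _ _).trans (.parNil p))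

theorem mk_nil : mk (.nil : Proc A) = 1 := rfl

theorem mk_par (p q : Proc A) : mk (.par p q) = mk p * mk q := rfl

/-- The labelled transitions between bisimilarity classes. -/
def Step (x : BisimClass A) (a : A) (y : BisimClass A) : Prop :=
  ∃ p q, CCS.Step p a q ∧ mk p = x ∧ mk q = y

theorem step_mk_iff {p : Proc A} {a : A} {y : BisimClass A} :
    (mk p).Step a y ↔ ∃ q, CCS.Step p a q ∧ mk q = y := by
  constructor
  · rintro ⟨p', q', h, hp, rfl⟩
    obtain ⟨q, hq, hbisim⟩ := (mk_eq_mk.1 hp).step h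
    exact ⟨q, hq, (mk_eq_mk.2 hbisim).symm⟩
  · rintro ⟨q, h, rfl⟩
    exact ⟨p, q, h, rfl, rfl⟩

theorem step_mul_iff {x y z : BisimClass A} {a : A} : (x * y).Step a z ↔
    (∃ x', x.Step a x' ∧ z = x' * y) ∨ ∃ y', y.Step a y' ∧ z = x * y' := by
  obtain ⟨p, rfl⟩ := mk_surjective x
  obtain ⟨q, rfl⟩ := mk_surjective y
  simp only [← mk_par, step_mk_iff, step_par_iff]
  constructor
  · rintro ⟨_, ⟨p', h, rfl⟩ | ⟨q', h, rfl⟩, rfl⟩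
    · exact Or.inl ⟨mk p', ⟨p', h, rfl⟩, rfl⟩
    · exact Or.inr ⟨mk q', ⟨q', h, rfl⟩, rfl⟩
  · rintro (⟨_, ⟨p', h, rfl⟩, rfl⟩ | ⟨_, ⟨q', h, rfl⟩, rfl⟩)
    · exact ⟨_, Or.inl ⟨p', h, rfl⟩, rfl⟩
    · exact ⟨_, Or.inr ⟨q', h, rfl⟩, rfl⟩

theorem Step.mul_right {x x' : BisimClass A} {a : A} (h : x.Step a x') (y : BisimClass A) :
    (x * y).Step a (x' * y) :=
  step_mul_iff.2 (Or.inl ⟨x', h, rfl⟩)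

theorem Step.mul_left {y y' : BisimClass A} {a : A} (h : y.Step a y') (x : BisimClass A) :
    (x * y).Step a (x * y') :=
  step_mul_iff.2 (Or.inr ⟨y', h, rfl⟩)

theorem isPrefix_mk_pre (a : A) (p : Proc A) : IsPrefix Step a (mk p) (mk (.pre a p)) := by
  intro b y
  rw [step_mk_iff]
  constructor
  · rintro ⟨q, ⟨⟩, rfl⟩
    exact ⟨rfl, rfl⟩
  · rintro ⟨rfl, rfl⟩
    exact ⟨p, .pre, rfl⟩

theorem mk_repl_step_iff {a b : A} {p : Proc A} {y : BisimClass A} :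
    (mk (.repl a p)).Step b y ↔ b = a ∧ y = mk (.repl a p) * mk p := by
  rw [step_mk_iff]
  constructor
  · rintro ⟨q, ⟨⟩, rfl⟩
    exact ⟨rfl, rfl⟩
  · rintro ⟨rfl, rfl⟩
    exact ⟨_, .repl, rfl⟩

/-- The closure of a relation under a common factor, together with equality. -/
def UpToMul (R : BisimClass A → BisimClass A → Prop) (x y : BisimClass A) : Prop :=
  x = y ∨ ∃ u v z, R u v ∧ x = u * z ∧ y = v * z

theorem UpToMul.mul_right {R : BisimClass A → BisimClass A → Prop} {x y : BisimClass A}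
    (h : UpToMul R x y) (w : BisimClass A) : UpToMul R (x * w) (y * w) := by
  rcases h with rfl | ⟨u, v, z, h, rfl, rfl⟩
  · exact Or.inl rfl
  · exact Or.inr ⟨u, v, z * w, h, mul_assoc u z w, mul_assoc v z w⟩

theorem eq_of_bisim_upToMul {R : BisimClass A → BisimClass A → Prop}
    (symm : ∀ {x y}, R x y → R y x)
    (sim : ∀ {x y a x'}, R x y → x.Step a x' → ∃ y', y.Step a y' ∧ UpToMul R x' y')
    {x y : BisimClass A} (h : R x y) : x = y := by
  obtain ⟨p, rfl⟩ := mk_surjective x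
  obtain ⟨q, rfl⟩ := mk_surjective y
  have sim_upTo {x y : BisimClass A} {a : A} {x' : BisimClass A} (hxy : UpToMul R x y)
      (hx : x.Step a x') : ∃ y', y.Step a y' ∧ UpToMul R x' y' := by
    rcases hxy with rfl | ⟨u, v, z, huv, rfl, rfl⟩
    · exact ⟨x', hx, Or.inl rfl⟩
    rcases step_mul_iff.1 hx with ⟨u', hu, rfl⟩ | ⟨z', hz, rfl⟩
    · obtain ⟨v', hv, huv'⟩ := sim huv hu
      exact ⟨v' * z, hv.mul_right z, huv'.mul_right z⟩
    · exact ⟨v * z', hz.mul_left v, Or.inr ⟨u, v, z', huv, rfl, rfl⟩⟩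
  refine mk_eq_mk.2 ⟨fun p q => UpToMul R (mk p) (mk q), ⟨?_, ?_⟩,
    Or.inr ⟨_, _, 1, h, (mul_one _).symm, (mul_one _).symm⟩⟩
  · rintro p q (h | ⟨u, v, z, h, hp, hq⟩)
    · exact Or.inl h.symm
    · exact Or.inr ⟨v, u, z, symm h, hq, hp⟩
  · intro p q hpq a p' hp
    obtain ⟨y', hy, hpy⟩ := sim_upTo hpq (step_mk_iff.2 ⟨p', hp, rfl⟩)
    obtain ⟨q', hq, rfl⟩ := step_mk_iff.1 hy
    exact ⟨q', hq, hpy⟩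

theorem ext_step {x y : BisimClass A} (h : ∀ a z, x.Step a z ↔ y.Step a z) : x = y :=
  eq_of_bisim_upToMul (R := fun x y => ∀ a z, x.Step a z ↔ y.Step a z)
    (fun h a z => (h a z).symm) (fun h hx => ⟨_, (h _ _).1 hx, Or.inl rfl⟩) h

end BisimClass

end Bisimilarity

/-! ### Finite terms -/

section Finite

variable {A : Type}

open BisimClass

theorem Step.isFin {p q : Proc A} {a : A} (h : Step p a q) (hp : p.IsFin) : q.IsFin := by
  induction h with
  | pre => exact hp
  | repl => exact hp.elim
  | parL _ _ ih => exact ⟨ih hp.1, hp.2⟩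
  | parR _ _ ih => exact ⟨hp.1, ih hp.2⟩

theorem Step.size_eq {p q : Proc A} {a : A} (h : Step p a q) (hp : p.IsFin) :
    p.size = q.size + 1 := by
  induction h with
  | pre => rfl
  | repl => exact hp.elim
  | parL q _ ih =>
    have := ih hp.1
    simp only [Proc.size]
    omega
  | parR p _ ih =>
    have := ih hp.2
    simp only [Proc.size]
    omega

theorem exists_step_of_size_pos {p : Proc A} (hp : 0 < p.size) : ∃ a q, Step p a q := by
  induction p with
  | nil => exact absurd hp (lt_irrefl 0)
  | pre a p => exact ⟨a, p, .pre⟩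
  | repl a p => exact ⟨a, _, .repl⟩
  | par p q ihp ihq =>
    rcases Nat.eq_zero_or_pos p.size with h | h
    · obtain ⟨a, q', hq⟩ := ihq (by simpa only [Proc.size, h, zero_add] using hp)
      exact ⟨a, _, .parR p hq⟩
    · obtain ⟨a, p', hp⟩ := ihp h
      exact ⟨a, _, .parL q hp⟩

theorem mk_eq_one_of_size_eq_zero {p : Proc A} (hp : p.size = 0) : mk p = 1 := by
  induction p with
  | nil => rfl
  | pre => exact absurd hp (Nat.succ_ne_zero _)
  | repl => exact absurd hp (Nat.succ_ne_zero _)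
  | par p q ihp ihq =>
    obtain ⟨hp, hq⟩ := Nat.add_eq_zero_iff.1 hp
    rw [mk_par, ihp hp, ihq hq, one_mul]

theorem Bisim.size_le {p q : Proc A} (h : Bisim p q) (hp : p.IsFin) (hq : q.IsFin) :
    p.size ≤ q.size := by
  induction hn : q.size generalizing p q with
  | zero =>
    by_contra! hpos
    obtain ⟨a, p', hp'⟩ := exists_step_of_size_pos hpos
    obtain ⟨q', hq', -⟩ := h.step hp'
    have := hq'.size_eq hq
    omega
  | succ n ih =>
    obtain ⟨a, q', hq'⟩ := exists_step_of_size_pos (p := q) (by omega)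
    obtain ⟨p', hp', h'⟩ := h.symm.step hq'
    have hpsize := hp'.size_eq hp
    have hqsize := hq'.size_eq hq
    have := ih h'.symm (hp'.isFin hp) (hq'.isFin hq) (by omega)
    omega

theorem Bisim.size_eq {p q : Proc A} (h : Bisim p q) (hp : p.IsFin) (hq : q.IsFin) :
    p.size = q.size :=
  (h.size_le hp hq).antisymm (h.symm.size_le hq hp)

end Finite

/-! ### Cancelling a persistent factor -/

section Persistent

variable {A : Type} {s : BisimClass A}

open BisimClass

/-- Every transition of `s` leads to a multiple of `s`, as for a product of replicated prefixes. -/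
def Persistent (s : BisimClass A) : Prop :=
  ∀ a y, s.Step a y → ∃ k, y = s * k

theorem Persistent.mul_eq_self_of_mul_mul_eq_self (hs : Persistent s) {g h : BisimClass A}
    (habs : s * (g * h) = s) : s * g = s := by
  refine (eq_of_bisim_upToMul (R := fun x y => x = s ∧ y = s * g ∨ x = s * g ∧ y = s)
    (fun h => h.symm.imp And.symm And.symm) ?_ (Or.inl ⟨rfl, rfl⟩)).symm
  rintro _ y a x' (⟨rfl, rfl⟩ | ⟨rfl, hy⟩) hx
  · obtain ⟨k, rfl⟩ := hs a x' hx
    exact ⟨_, hx.mul_right g, Or.inr ⟨_, _, k, Or.inl ⟨rfl, rfl⟩, rfl, mul_right_comm _ _ _⟩⟩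
  rw [hy]
  rcases step_mul_iff.1 hx with ⟨s', hs', rfl⟩ | ⟨g', hg', rfl⟩
  · obtain ⟨k, rfl⟩ := hs a s' hs'
    exact ⟨_, hs', Or.inr ⟨_, _, k, Or.inr ⟨rfl, rfl⟩, mul_right_comm _ _ _, rfl⟩⟩
  · have answer : (s * (g * h)).Step a (s * (g' * h)) := (hg'.mul_right h).mul_left s
    rw [habs] at answer
    refine ⟨s * (g' * h), answer, Or.inr ⟨_, _, g' * h, Or.inr ⟨rfl, rfl⟩, ?_, rfl⟩⟩
    calc s * g' = s * (g * h) * g' := by rw [habs]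
      _ = s * g * (g' * h) := by ac_rfl

theorem Persistent.mul_mk_pre_congr (hs : Persistent s) (a : A) {p q : Proc A}
    (h : s * mk p = s * mk q) : s * mk (.pre a p) = s * mk (.pre a q) := by
  refine eq_of_bisim_upToMul (R := fun x y => ∃ p q, s * mk p = s * mk q ∧
    x = s * mk (.pre a p) ∧ y = s * mk (.pre a q)) ?_ ?_ ⟨p, q, h, rfl, rfl⟩
  · rintro _ _ ⟨p, q, h, rfl, rfl⟩
    exact ⟨q, p, h.symm, rfl, rfl⟩
  rintro _ _ b x' ⟨p, q, h, rfl, rfl⟩ hx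
  rcases step_mul_iff.1 hx with ⟨s', hs', rfl⟩ | ⟨p', hp', rfl⟩
  · obtain ⟨k, rfl⟩ := hs b s' hs'
    exact ⟨_, hs'.mul_right _, Or.inr ⟨_, _, k, ⟨p, q, h, rfl, rfl⟩, mul_right_comm _ _ _,
      mul_right_comm _ _ _⟩⟩
  · obtain ⟨rfl, rfl⟩ := (isPrefix_mk_pre a p b p').1 hp'
    exact ⟨_, ((isPrefix_mk_pre b q b _).2 ⟨rfl, rfl⟩).mul_left s, Or.inl h⟩

/-- A finite term none of whose prefixed subterms is absorbed by `s`. -/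
def AbsorbFree (s : BisimClass A) : Proc A → Prop
  | .nil => True
  | .pre a p => AbsorbFree s p ∧ s * mk (.pre a p) ≠ s
  | .par p q => AbsorbFree s p ∧ AbsorbFree s q
  | .repl _ _ => False

theorem AbsorbFree.isFin {p : Proc A} (hp : AbsorbFree s p) : p.IsFin := by
  induction p with
  | nil => trivial
  | pre a p ih => exact ih hp.1
  | par p q ihp ihq => exact ⟨ihp hp.1, ihq hp.2⟩
  | repl => exact hp

theorem AbsorbFree.step {p q : Proc A} {a : A} (hp : AbsorbFree s p) (h : Step p a q) :
    AbsorbFree s q := by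
  induction h with
  | pre => exact hp.1
  | repl => exact hp.elim
  | parL _ _ ih => exact ⟨ih hp.1, hp.2⟩
  | parR _ _ ih => exact ⟨hp.1, ih hp.2⟩

theorem AbsorbFree.size_eq_zero_of_mul_eq_self (hs : Persistent s) {p : Proc A}
    (hp : AbsorbFree s p) (habs : s * mk p = s) : p.size = 0 := by
  induction p with
  | nil => rfl
  | pre a p => exact absurd habs hp.2
  | repl => exact hp.elim
  | par p q ihp ihq =>
    rw [mk_par] at habs
    have hleft := ihp hp.1 (hs.mul_eq_self_of_mul_mul_eq_self habs)
    have hright := ihq hp.2 (hs.mul_eq_self_of_mul_mul_eq_self (mul_comm (mk p) _ ▸ habs))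
    rw [Proc.size, hleft, hright]

theorem Persistent.exists_size_lt_of_not_absorbFree (hs : Persistent s) {p : Proc A} (hp : p.IsFin)
    (h : ¬AbsorbFree s p) : ∃ q : Proc A, q.IsFin ∧ q.size < p.size ∧ s * mk q = s * mk p := by
  induction p with
  | nil => exact absurd trivial h
  | repl => exact hp.elim
  | pre a p ih =>
    by_cases habs : s * mk (.pre a p) = s
    · exact ⟨.nil, trivial, Nat.succ_pos _, by rw [habs, mk_nil, mul_one]⟩
    obtain ⟨q, hq, hlt, heq⟩ := ih hp fun hfree => h ⟨hfree, habs⟩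
    exact ⟨.pre a q, hq, Nat.succ_lt_succ hlt, hs.mul_mk_pre_congr a heq⟩
  | par p₁ p₂ ih₁ ih₂ =>
    by_cases h₁ : AbsorbFree s p₁
    · obtain ⟨q, hq, hlt, heq⟩ := ih₂ hp.2 fun h₂ => h ⟨h₁, h₂⟩
      refine ⟨.par p₁ q, ⟨hp.1, hq⟩, Nat.add_lt_add_left hlt _, ?_⟩
      rw [mk_par, mk_par, mul_left_comm, heq, mul_left_comm]
    · obtain ⟨q, hq, hlt, heq⟩ := ih₁ hp.1 h₁
      refine ⟨.par q p₂, ⟨hq, hp.2⟩, Nat.add_lt_add_right hlt _, ?_⟩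
      rw [mk_par, mk_par, ← mul_assoc, heq, mul_assoc]

-- Each transition of `q` must be matched on the left, where it consumes at most one prefix of `p`.
theorem AbsorbFree.size_le_of_mul_eq (hs : Persistent s) {p q : Proc A} {c : BisimClass A}
    (hp : AbsorbFree s p) (hq : q.IsFin) (h : s * mk p * c = s * mk q) : p.size ≤ q.size := by
  induction hn : q.size generalizing p q c with
  | zero =>
    rw [mk_eq_one_of_size_eq_zero hn, mul_one, mul_assoc] at h
    exact (hp.size_eq_zero_of_mul_eq_self hs (hs.mul_eq_self_of_mul_mul_eq_self h)).le
  | succ n ih =>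
    obtain ⟨b, q', hq'⟩ := exists_step_of_size_pos (p := q) (by omega)
    have hqsize : q'.size = n := by
      have := hq'.size_eq hq
      omega
    have answer : (s * mk p * c).Step b (s * mk q') :=
      h ▸ (step_mk_iff.2 ⟨q', hq', rfl⟩).mul_left s
    rcases step_mul_iff.1 answer with ⟨y, hy, heq⟩ | ⟨c', -, heq⟩
    · rcases step_mul_iff.1 hy with ⟨s', hs', rfl⟩ | ⟨y', hy', rfl⟩
      · obtain ⟨k, rfl⟩ := hs b s' hs'
        have heq' : s * mk p * (k * c) = s * mk q' := by
          rw [heq, mul_right_comm s k, mul_assoc (s * mk p)]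
        exact (ih hp (hq'.isFin hq) heq' hqsize).trans n.le_succ
      · obtain ⟨p', hp', rfl⟩ := step_mk_iff.1 hy'
        have hle := ih (hp.step hp') (hq'.isFin hq) heq.symm hqsize
        have := hp'.size_eq hp.isFin
        omega
    · exact (ih hp (hq'.isFin hq) heq.symm hqsize).trans n.le_succ

theorem AbsorbFree.bisim_of_mul_eq (hs : Persistent s) {p q : Proc A} (hp : AbsorbFree s p)
    (hq : AbsorbFree s q) (h : s * mk p = s * mk q) : Bisim p q := by
  refine ⟨fun p q => AbsorbFree s p ∧ AbsorbFree s q ∧ s * mk p = s * mk q, ⟨?_, ?_⟩, hp, hq, h⟩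
  · rintro p q ⟨hp, hq, h⟩
    exact ⟨hq, hp, h.symm⟩
  rintro p q ⟨hp, hq, h⟩ a p' hp'
  have answer : (s * mk q).Step a (s * mk p') := h ▸ (step_mk_iff.2 ⟨p', hp', rfl⟩).mul_left s
  rcases step_mul_iff.1 answer with ⟨s', hs', heq⟩ | ⟨y, hy, heq⟩
  · obtain ⟨k, rfl⟩ := hs a s' hs'
    rw [mul_right_comm] at heq
    have hqp' : q.size ≤ p'.size := hq.size_le_of_mul_eq hs (hp'.isFin hp.isFin) heq.symm
    have hpq : p.size ≤ q.size := hp.size_le_of_mul_eq hs hq.isFin (c := 1) (by rw [mul_one, h])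
    have := hp'.size_eq hp.isFin
    omega
  · obtain ⟨q', hq', rfl⟩ := step_mk_iff.1 hy
    exact ⟨q', hq', hp.step hp', hq.step hq', heq⟩

end Persistent

/-! ### Products of replicated prefixes -/

section Replicated

variable {A : Type}

open BisimClass

/-- The finite terms of the calculus. -/
abbrev FinProc (A : Type) : Type := {p : Proc A // p.IsFin}

/-- The class of `∏i !αi.Fi`, for a multiset of components `(αi, Fi)`. -/
def replClass (m : Multiset (A × FinProc A)) : BisimClass A :=
  (m.map fun x => mk (.repl x.1 x.2)).prod

/-- The size of `∏i !αi.Fi`, for a multiset of components `(αi, Fi)`. -/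
def replSize (m : Multiset (A × FinProc A)) : ℕ :=
  (m.map fun x => x.2.1.size + 1).sum

/-- The label and target of the transition that the component `x = (α, F)` contributes to `s`. -/
def residual (s : BisimClass A) (x : A × FinProc A) : A × BisimClass A :=
  (x.1, s * mk x.2)

theorem replClass_cons (x : A × FinProc A) (m : Multiset (A × FinProc A)) :
    replClass (x ::ₘ m) = mk (.repl x.1 x.2) * replClass m := by
  rw [replClass, Multiset.map_cons, Multiset.prod_cons, replClass]

theorem replSize_cons (x : A × FinProc A) (m : Multiset (A × FinProc A)) :
    replSize (x ::ₘ m) = x.2.1.size + 1 + replSize m := by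
  rw [replSize, Multiset.map_cons, Multiset.sum_cons, replSize]

theorem replClass_step_iff {m : Multiset (A × FinProc A)} {a : A} {y : BisimClass A} :
    (replClass m).Step a y ↔ (a, y) ∈ m.map (residual (replClass m)) := by
  simp only [Multiset.mem_map, residual, Prod.mk.injEq]
  induction m using Multiset.induction_on generalizing y with
  | empty =>
    have : ¬(mk (.nil : Proc A)).Step a y := by
      rintro h
      obtain ⟨q, ⟨⟩, -⟩ := step_mk_iff.1 h
    simpa [replClass, ← mk_nil] using this
  | cons x m ih =>
    simp only [replClass_cons, step_mul_iff, mk_repl_step_iff, ih, Multiset.mem_cons,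
      exists_eq_or_imp]
    refine or_congr ?_ ?_
    · constructor
      · rintro ⟨_, ⟨rfl, rfl⟩, rfl⟩
        exact ⟨rfl, mul_right_comm _ _ _⟩
      · rintro ⟨rfl, rfl⟩
        exact ⟨_, ⟨rfl, rfl⟩, mul_right_comm _ _ _⟩
    · constructor
      · rintro ⟨_, ⟨z, hz, rfl, rfl⟩, rfl⟩
        exact ⟨z, hz, rfl, mul_assoc _ _ _⟩
      · rintro ⟨z, hz, rfl, rfl⟩
        exact ⟨_, ⟨z, hz, rfl, rfl⟩, mul_assoc _ _ _⟩

theorem persistent_replClass (m : Multiset (A × FinProc A)) : Persistent (replClass m) := by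
  intro a y h
  obtain ⟨x, -, hx⟩ := Multiset.mem_map.1 (replClass_step_iff.1 h)
  exact ⟨mk x.2, (Prod.mk.inj hx).2.symm⟩

-- The transitions determine `s` because each of them leads to a multiple of `s`.
theorem eq_replClass_of_step_iff {s : BisimClass A} {m : Multiset (A × FinProc A)}
    (h : ∀ a y, s.Step a y ↔ (a, y) ∈ m.map (residual s)) : s = replClass m := by
  have residuals_match {x x' y : BisimClass A} {a : A}
      (hx : ∀ a z, x.Step a z ↔ (a, z) ∈ m.map (residual x))
      (hy : ∀ a z, y.Step a z ↔ (a, z) ∈ m.map (residual y)) (hstep : x.Step a x') :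
      ∃ k, x' = x * k ∧ y.Step a (y * k) := by
    obtain ⟨c, hc, heq⟩ := Multiset.mem_map.1 ((hx a x').1 hstep)
    obtain ⟨rfl, rfl⟩ := Prod.mk.inj heq
    exact ⟨mk c.2, rfl, (hy _ _).2 (Multiset.mem_map_of_mem _ hc)⟩
  refine eq_of_bisim_upToMul (R := fun x y =>
    (∀ a z, x.Step a z ↔ (a, z) ∈ m.map (residual x)) ∧
      ∀ a z, y.Step a z ↔ (a, z) ∈ m.map (residual y)) And.symm ?_
    ⟨h, fun a z => replClass_step_iff⟩
  intro x y a x' hxy hx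
  obtain ⟨k, rfl, hy⟩ := residuals_match hxy.1 hxy.2 hx
  exact ⟨y * k, hy, Or.inr ⟨x, y, k, hxy, rfl, rfl⟩⟩

/-- No product of replicated prefixes of smaller size is bisimilar to `∏i !αi.Fi`. -/
def IsMinimal (m : Multiset (A × FinProc A)) : Prop :=
  ∀ m', replClass m' = replClass m → replSize m ≤ replSize m'

namespace IsMinimal

variable {m m' : Multiset (A × FinProc A)}

theorem replSize_le (hm : IsMinimal m)
    (h : ∀ r, r ∈ m.map (residual (replClass m)) ↔ r ∈ m'.map (residual (replClass m))) :
    replSize m ≤ replSize m' :=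
  hm m' (eq_replClass_of_step_iff fun a y => replClass_step_iff.trans (h (a, y))).symm

theorem absorbFree_of_mem (hm : IsMinimal m) {x : A × FinProc A} (hx : x ∈ m) :
    AbsorbFree (replClass m) x.2.1 := by
  by_contra hfree
  obtain ⟨F, hF, hlt, heq⟩ :=
    (persistent_replClass m).exists_size_lt_of_not_absorbFree x.2.2 hfree
  obtain ⟨m₀, hm₀⟩ := Multiset.exists_cons_of_mem hx
  have hres : residual (replClass m) (x.1, ⟨F, hF⟩) = residual (replClass m) x :=
    Prod.ext rfl heq
  have hle := hm.replSize_le (m' := (x.1, ⟨F, hF⟩) ::ₘ m₀) fun r => by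
    rw [Multiset.map_cons, hres, ← Multiset.map_cons, ← hm₀]
  rw [hm₀, replSize_cons, replSize_cons] at hle
  dsimp only at hle
  omega

theorem nodup_map_residual (hm : IsMinimal m) : (m.map (residual (replClass m))).Nodup := by
  classical
  rw [Multiset.nodup_iff_ne_cons_cons]
  intro r t ht
  obtain ⟨x, hx, -, hrest⟩ := (Multiset.map_eq_cons _ _ _ _).2 ht
  have hle := hm.replSize_le (m' := m.erase x) fun r' => by
    rw [hrest, ht, Multiset.mem_cons, or_iff_right_of_imp]
    exact fun h => h ▸ Multiset.mem_cons_self r t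
  have hsize := replSize_cons x (m.erase x)
  rw [Multiset.cons_erase hx] at hsize
  omega

theorem map_residual_eq (hm : IsMinimal m) (hm' : IsMinimal m')
    (h : replClass m = replClass m') :
    m.map (residual (replClass m)) = m'.map (residual (replClass m)) := by
  refine (Multiset.Nodup.ext hm.nodup_map_residual (h ▸ hm'.nodup_map_residual)).2 ?_
  rintro ⟨a, y⟩
  rw [← replClass_step_iff, h, replClass_step_iff]

end IsMinimal

end Replicated

/-! ### Completeness of `≡D` for finite terms -/

theorem map_eq_map_of_map_eq_map {α β γ : Type*} {f : α → β} {g : α → γ} {m m' : Multiset α}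
    (h : m.map f = m'.map f) (hfg : ∀ x ∈ m, ∀ y ∈ m', f x = f y → g x = g y) :
    m.map g = m'.map g := by
  rw [← Multiset.rel_eq, Multiset.rel_map] at h ⊢
  exact h.mono hfg

section Completeness

variable {A : Type}

open BisimClass

/-- Terms up to `≡D`: a commutative monoid under parallel composition. -/
def EqDClass (A : Type) : Type := Quotient (⟨EqD, .refl, .symm, .trans⟩ : Setoid (Proc A))

namespace EqDClass

/-- The `≡D`-class of a term. -/
def mk (p : Proc A) : EqDClass A := Quotient.mk _ p

theorem mk_eq_mk {p q : Proc A} : mk p = mk q ↔ EqD p q := Quotient.eq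

instance : CommMonoid (EqDClass A) where
  mul := Quotient.map₂ .par fun _ _ hp _ _ hq => hp.congPar hq
  one := mk .nil
  mul_assoc := by
    rintro ⟨p⟩ ⟨q⟩ ⟨r⟩
    exact mk_eq_mk.2 (.parAssoc p q r)
  mul_comm := by
    rintro ⟨p⟩ ⟨q⟩
    exact mk_eq_mk.2 (.parComm p q)
  mul_one := by
    rintro ⟨p⟩
    exact mk_eq_mk.2 (.parNil p)
  one_mul := by
    rintro ⟨p⟩
    exact mk_eq_mk.2 ((EqD.parComm _ _).trans (.parNil p))

theorem mk_nil : mk (.nil : Proc A) = 1 := rfl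

theorem mk_par (p q : Proc A) : mk (.par p q) = mk p * mk q := rfl

theorem mk_reps (n : ℕ) (p : Proc A) : mk (.reps n p) = mk p ^ n := by
  induction n with
  | zero => rw [pow_zero, Proc.reps, mk_nil]
  | succ n ih => rw [pow_succ', Proc.reps, mk_par, ih]

end EqDClass

theorem BisimClass.mk_reps (n : ℕ) (p : Proc A) : mk (.reps n p) = mk p ^ n := by
  induction n with
  | zero => rw [pow_zero, Proc.reps, mk_nil]
  | succ n ih => rw [pow_succ', Proc.reps, mk_par, ih]

theorem isFin_reps (n : ℕ) {p : Proc A} (hp : p.IsFin) : (Proc.reps n p).IsFin := by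
  induction n with
  | zero => trivial
  | succ n ih => exact ⟨hp, ih⟩

/-- The bisimilarity classes of finite terms. -/
def finClasses (A : Type) : Submonoid (BisimClass A) where
  carrier := {x | ∃ p : FinProc A, mk p = x}
  mul_mem' := by
    rintro _ _ ⟨p, rfl⟩ ⟨q, rfl⟩
    exact ⟨⟨.par p.1 q.1, p.2, q.2⟩, rfl⟩
  one_mem' := ⟨⟨.nil, trivial⟩, rfl⟩

/-- The class of a finite term, as an element of `finClasses`. -/
def finClass (p : FinProc A) : finClasses A := ⟨mk p, p, rfl⟩

/-- The class of `a.p`, for a component `x = (a, p)`. -/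
def prefixClass (x : A × FinProc A) : finClasses A := finClass ⟨.pre x.1 x.2, x.2.2⟩

theorem finClass_eq_iff {p q : FinProc A} : finClass p = finClass q ↔ Bisim p.1 q.1 :=
  Subtype.ext_iff.trans mk_eq_mk

theorem finClass_surjective : Function.Surjective (finClass : FinProc A → finClasses A) := by
  rintro ⟨_, p, rfl⟩
  exact ⟨p, rfl⟩

/-- The transitions between classes of finite terms. -/
def finStep (x : finClasses A) (a : A) (y : finClasses A) : Prop :=
  (x : BisimClass A).Step a y

/-- The size shared by all finite terms of a class. -/
noncomputable def finSize (x : finClasses A) : ℕ := (finClass_surjective x).choose.1.size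

theorem finSize_finClass (p : FinProc A) : finSize (finClass p) = p.1.size :=
  (finClass_eq_iff.1 (finClass_surjective (finClass p)).choose_spec).size_eq (Subtype.prop _) p.2

theorem finStep_finClass_iff {p : FinProc A} {a : A} {y : finClasses A} :
    finStep (finClass p) a y ↔ ∃ q : FinProc A, Step p.1 a q.1 ∧ y = finClass q := by
  refine step_mk_iff.trans ⟨?_, ?_⟩
  · rintro ⟨q, hq, hy⟩
    exact ⟨⟨q, hq.isFin p.2⟩, hq, Subtype.ext hy.symm⟩
  · rintro ⟨q, hq, rfl⟩
    exact ⟨q, hq, rfl⟩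

theorem isInterleaving_finClasses :
    IsInterleaving (finStep : finClasses A → A → finClasses A → Prop) finSize where
  size_mul x y := by
    obtain ⟨p, rfl⟩ := finClass_surjective x
    obtain ⟨q, rfl⟩ := finClass_surjective y
    simp only [finSize_finClass]
    exact finSize_finClass ⟨.par p.1 q.1, p.2, q.2⟩
  size_step {x a y} h := by
    obtain ⟨p, rfl⟩ := finClass_surjective x
    obtain ⟨q, hq, rfl⟩ := finStep_finClass_iff.1 h
    simpa only [finSize_finClass] using hq.size_eq p.2
  step_mul_iff {x y a z} := by
    obtain ⟨p, rfl⟩ := finClass_surjective x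
    obtain ⟨q, rfl⟩ := finClass_surjective y
    refine (finStep_finClass_iff (p := ⟨.par p.1 q.1, p.2, q.2⟩)).trans ?_
    simp only [finStep_finClass_iff, step_par_iff]
    constructor
    · rintro ⟨⟨_, hr⟩, ⟨p', h, rfl⟩ | ⟨q', h, rfl⟩, rfl⟩
      · exact Or.inl ⟨_, ⟨⟨p', hr.1⟩, h, rfl⟩, rfl⟩
      · exact Or.inr ⟨_, ⟨⟨q', hr.2⟩, h, rfl⟩, rfl⟩
    · rintro (⟨_, ⟨p', h, rfl⟩, rfl⟩ | ⟨_, ⟨q', h, rfl⟩, rfl⟩)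
      · exact ⟨⟨.par p'.1 q.1, p'.2, q.2⟩, Or.inl ⟨p', h, rfl⟩, rfl⟩
      · exact ⟨⟨.par p.1 q'.1, p.2, q'.2⟩, Or.inr ⟨q', h, rfl⟩, rfl⟩
  exists_step {x} hx := by
    obtain ⟨p, rfl⟩ := finClass_surjective x
    have hpos : 0 < p.1.size := Nat.pos_of_ne_zero fun h0 =>
      hx (Subtype.ext (mk_eq_one_of_size_eq_zero h0))
    obtain ⟨a, q, hq⟩ := exists_step_of_size_pos hpos
    exact ⟨a, _, finStep_finClass_iff.2 ⟨⟨q, hq.isFin p.2⟩, hq, rfl⟩⟩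

theorem mem_finClasses_of_step {x y : BisimClass A} {a : A} (hx : x ∈ finClasses A)
    (h : x.Step a y) : y ∈ finClasses A := by
  obtain ⟨p, rfl⟩ := hx
  obtain ⟨q, hq, rfl⟩ := step_mk_iff.1 h
  exact ⟨⟨q, hq.isFin p.2⟩, rfl⟩

theorem ext_finStep {x y : finClasses A} (h : ∀ a z, finStep x a z ↔ finStep y a z) : x = y :=
  Subtype.ext <| ext_step fun a z =>
    ⟨fun hx => (h a ⟨z, mem_finClasses_of_step x.2 hx⟩).1 hx,
      fun hy => (h a ⟨z, mem_finClasses_of_step y.2 hy⟩).2 hy⟩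

theorem isPrefix_prefixClass (x : A × FinProc A) :
    IsPrefix finStep x.1 (finClass x.2) (prefixClass x) := fun b y =>
  (isPrefix_mk_pre x.1 x.2.1 b y).trans
    (and_congr_right' (Subtype.ext_iff (a1 := y) (a2 := finClass x.2)).symm)

theorem eq_and_bisim_of_prefixClass_eq {x y : A × FinProc A} (h : prefixClass x = prefixClass y) :
    x.1 = y.1 ∧ Bisim x.2.1 y.2.1 :=
  ((isPrefix_prefixClass x).unique (h ▸ isPrefix_prefixClass y)).imp_right finClass_eq_iff.1

theorem exists_irreducible_prefixClass (a : A) (F : FinProc A) :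
    ∃ (P : FinProc A) (n : ℕ), Irreducible (prefixClass (a, P)) ∧
      prefixClass (a, F) = prefixClass (a, P) ^ (n + 1) ∧
      finClass F = finClass P * prefixClass (a, P) ^ n := by
  obtain ⟨p, p', n, hirr, hp, hpow, hF⟩ :=
    isInterleaving_finClasses.exists_irreducible_prefix_pow (isPrefix_prefixClass (a, F))
  obtain ⟨P, rfl⟩ := finClass_surjective p'
  obtain rfl : p = prefixClass (a, P) :=
    ext_finStep fun b y => (hp b y).trans (isPrefix_prefixClass (a, P) b y).symm
  exact ⟨P, n, hirr, hpow, hF⟩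

theorem bisim_par_reps_of_finClass_eq {a : A} {F P : FinProc A} {n : ℕ}
    (h : finClass F = finClass P * prefixClass (a, P) ^ n) :
    Bisim F.1 (.par P.1 (.reps n (.pre a P.1))) := by
  rw [← mk_eq_mk, mk_par, mk_reps]
  exact congrArg Subtype.val h

theorem exists_irreducible_prefix_decomposition {n : ℕ}
    (complete_below : ∀ P Q : Proc A, P.IsFin → Q.IsFin → P.size < n → Bisim P Q → EqD P Q)
    {F : Proc A} (hF : F.IsFin) (hn : F.size ≤ n) : ∃ m : Multiset (A × FinProc A),
      IsFactorization (m.map prefixClass) (finClass ⟨F, hF⟩) ∧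
        (m.map fun x => EqDClass.mk (.pre x.1 x.2.1)).prod = EqDClass.mk F := by
  induction F with
  | nil => exact ⟨0, ⟨by simp, rfl⟩, rfl⟩
  | repl => exact hF.elim
  | par p q ihp ihq =>
    have hsize : p.size + q.size ≤ n := hn
    obtain ⟨mp, hp, hpD⟩ := ihp hF.1 (by omega)
    obtain ⟨mq, hq, hqD⟩ := ihq hF.2 (by omega)
    refine ⟨mp + mq, ?_, ?_⟩
    · rw [Multiset.map_add]
      exact hp.mul hq
    · rw [Multiset.map_add, Multiset.prod_add, hpD, hqD, EqDClass.mk_par]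
  | pre a F =>
    obtain ⟨P, k, hirr, hpow, hFP⟩ := exists_irreducible_prefixClass a ⟨F, hF⟩
    have hF' : EqD F (.par P.1 (.reps k (.pre a P.1))) :=
      complete_below _ _ hF ⟨P.2, isFin_reps k P.2⟩ hn (bisim_par_reps_of_finClass_eq hFP)
    refine ⟨Multiset.replicate (k + 1) (a, P), ⟨?_, ?_⟩, ?_⟩
    · rw [Multiset.map_replicate]
      exact fun x hx => Multiset.eq_of_mem_replicate hx ▸ hirr
    · rw [Multiset.map_replicate, Multiset.prod_replicate, ← hpow]
      rfl
    · rw [Multiset.map_replicate, Multiset.prod_replicate, ← EqDClass.mk_reps]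
      exact (EqDClass.mk_eq_mk.2 ((hF'.congPre a).trans (.distr a P.1 k P.2))).symm

theorem Bisim.eqD {F G : Proc A} (h : Bisim F G) (hF : F.IsFin) (hG : G.IsFin) : EqD F G := by
  induction hn : F.size using Nat.strong_induction_on generalizing F G with
  | _ n ih =>
    have complete_below (P Q : Proc A) (hP : P.IsFin) (hQ : Q.IsFin) (hlt : P.size < n)
        (hPQ : Bisim P Q) : EqD P Q := ih _ hlt hPQ hP hQ rfl
    obtain ⟨m, hm, hmD⟩ := exists_irreducible_prefix_decomposition complete_below hF hn.le
    obtain ⟨m', hm', hmD'⟩ := exists_irreducible_prefix_decomposition complete_below hG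
      ((h.symm.size_eq hG hF).trans hn).le
    have hFG : finClass ⟨F, hF⟩ = finClass ⟨G, hG⟩ := finClass_eq_iff.2 h
    rw [← EqDClass.mk_eq_mk, ← hmD, ← hmD', map_eq_map_of_map_eq_map
      (isInterleaving_finClasses.isFactorization_unique hm (hFG ▸ hm'))]
    intro x hx y _ hxy
    obtain ⟨hlabel, hbody⟩ := eq_and_bisim_of_prefixClass_eq hxy
    have hle := isInterleaving_finClasses.size_le_of_mem (Multiset.mem_map_of_mem prefixClass hx)
    rw [hm.2, prefixClass, finSize_finClass, finSize_finClass] at hle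
    have hlt : x.2.1.size < n := hn ▸ hle
    rw [EqDClass.mk_eq_mk, hlabel]
    exact .congPre y.1 (complete_below _ _ x.2.2 y.2.2 hlt hbody)

end Completeness

/-! ### Seeds with only replicated components -/

section Seeds

variable {A : Type}

open BisimClass

/-- A term with only replicated components, of minimal size among the bisimilar terms of the same
shape (whereas `IsSeed` compares with all well-formed terms). -/
def IsReplSeed (S : Proc A) : Prop :=
  ReplOnly S ∧ ∀ T, ReplOnly T → Bisim T S → S.size ≤ T.size

theorem ReplOnly.wf {S : Proc A} (hS : ReplOnly S) : S.Wf := by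
  induction S with
  | nil => trivial
  | pre => exact hS.elim
  | par p q ihp ihq => exact ⟨ihp hS.1, ihq hS.2⟩
  | repl => exact hS

theorem IsSeed.isReplSeed {S : Proc A} (hs : IsSeed S) (hS : ReplOnly S) : IsReplSeed S :=
  ⟨hS, fun T hT => hs.2 T hT.wf⟩

/-- The `≡D`-class of `∏i !αi.Fi`, for a multiset of components `(αi, Fi)`. -/
def replEqDClass (m : Multiset (A × FinProc A)) : EqDClass A :=
  (m.map fun x => EqDClass.mk (.repl x.1 x.2.1)).prod

theorem ReplOnly.exists_components {S : Proc A} (hS : ReplOnly S) :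
    ∃ m : Multiset (A × FinProc A),
      replClass m = mk S ∧ replEqDClass m = EqDClass.mk S ∧ replSize m = S.size := by
  induction S with
  | nil => exact ⟨0, rfl, rfl, rfl⟩
  | pre => exact hS.elim
  | repl a p =>
    refine ⟨{(a, ⟨p, hS⟩)}, ?_, ?_, ?_⟩
    · rw [replClass, Multiset.map_singleton, Multiset.prod_singleton]
    · rw [replEqDClass, Multiset.map_singleton, Multiset.prod_singleton]
    · rw [replSize, Multiset.map_singleton, Multiset.sum_singleton, Proc.size]
  | par p q ihp ihq =>
    obtain ⟨m, hm, hmD, hsize⟩ := ihp hS.1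
    obtain ⟨m', hm', hmD', hsize'⟩ := ihq hS.2
    refine ⟨m + m', ?_, ?_, ?_⟩
    · rw [mk_par, ← hm, ← hm', replClass, Multiset.map_add, Multiset.prod_add, replClass, replClass]
    · rw [EqDClass.mk_par, ← hmD, ← hmD', replEqDClass, Multiset.map_add, Multiset.prod_add,
        replEqDClass, replEqDClass]
    · rw [Proc.size, ← hsize, ← hsize', replSize, Multiset.map_add, Multiset.sum_add, replSize,
        replSize]

theorem exists_replOnly (m : Multiset (A × FinProc A)) :
    ∃ T : Proc A, ReplOnly T ∧ mk T = replClass m ∧ T.size = replSize m := by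
  induction m using Multiset.induction_on with
  | empty => exact ⟨.nil, trivial, rfl, rfl⟩
  | cons x m ih =>
    obtain ⟨T, hT, hclass, hsize⟩ := ih
    refine ⟨.par (.repl x.1 x.2) T, ⟨x.2.2, hT⟩, ?_, ?_⟩
    · rw [mk_par, hclass, replClass_cons]
    · rw [Proc.size, Proc.size, hsize, replSize_cons]

theorem IsReplSeed.exists_minimal_components {S : Proc A} (hS : IsReplSeed S) :
    ∃ m : Multiset (A × FinProc A),
      IsMinimal m ∧ replClass m = mk S ∧ replEqDClass m = EqDClass.mk S := by
  obtain ⟨m, hm, hmD, hsize⟩ := hS.1.exists_components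
  refine ⟨m, fun m' hm' => ?_, hm, hmD⟩
  obtain ⟨T, hT, hclass, hTsize⟩ := exists_replOnly m'
  rw [hsize, ← hTsize]
  exact hS.2 T hT (mk_eq_mk.1 (by rw [hclass, hm', hm]))

theorem IsMinimal.replEqDClass_eq {m m' : Multiset (A × FinProc A)} (hm : IsMinimal m)
    (hm' : IsMinimal m') (h : replClass m = replClass m') : replEqDClass m = replEqDClass m' := by
  refine congrArg Multiset.prod (map_eq_map_of_map_eq_map (hm.map_residual_eq hm' h) ?_)
  intro x hx y hy hxy
  obtain ⟨hlabel, hbody⟩ := Prod.mk.inj hxy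
  have hpx : AbsorbFree (replClass m) x.2.1 := hm.absorbFree_of_mem hx
  have hpy : AbsorbFree (replClass m) y.2.1 := h ▸ hm'.absorbFree_of_mem hy
  have hbisim : Bisim x.2.1 y.2.1 := hpx.bisim_of_mul_eq (persistent_replClass m) hpy hbody
  rw [EqDClass.mk_eq_mk, hlabel]
  exact .congRepl y.1 (hbisim.eqD x.2.2 y.2.2)

end Seeds

end CCS

theorem eqD_of_bisim_repl_seeds_general {A : Type} {S S' : CCS.Proc A} (hs : CCS.IsReplSeed S)
    (hs' : CCS.IsReplSeed S') (h : CCS.Bisim S S') : CCS.EqD S S' := by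
  obtain ⟨m, hm, hclass, hclassD⟩ := hs.exists_minimal_components
  obtain ⟨m', hm', hclass', hclassD'⟩ := hs'.exists_minimal_components
  have heq : CCS.replClass m = CCS.replClass m' := by
    rw [hclass, hclass', CCS.BisimClass.mk_eq_mk.2 h]
  rw [← CCS.EqDClass.mk_eq_mk, ← hclassD, ← hclassD', hm.replEqDClass_eq hm' heq]

/-- If `S` and `S'` are seeds with only replicated components and `S ~ S'`,
then `S ≡D S'`. -/
theorem eqD_of_bisim_repl_seeds {A : Type} [Countable A]
    (S S' : CCS.Proc A) (hS : CCS.ReplOnly S) (hS' : CCS.ReplOnly S')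
    (hs : CCS.IsSeed S) (hs' : CCS.IsSeed S')
    (h : CCS.Bisim S S') :
    CCS.EqD S S' :=
  eqD_of_bisim_repl_seeds_general (hs.isReplSeed hS) (hs'.isReplSeed hS') h
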